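/- Let (Ω_i, 𝒜_i, μ_i), i = 1,…,n, be probability spaces and μ = ⊗_{i=1}^n μ_i their product. Let f be a bounded measurable function whose Hoeffding decomposition is f = Σ_{k=2}^n f_k. Assume ‖𝔡^{(2)} f(x)‖_{HS} ≤ B_1 for all x and some B_1 ≥ 0, and |𝔡_i f(x)| ≤ B_2 for all i = 1,…,n, all x, and some B_2 ≥ 0. Then ∫ exp( (c/(B_1 + B_2)) |f| ) dμ ≤ 2 for the numerical constant c = 1/11; if all underlying measures μ_i are two-point measures, one can take c = 1/7. -/

import Mathlib

/-!
The constant `1/7` is valid for all product measures, which gives both claims. Put `B = B₁ + B₂`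
and `W = |𝔡f|²`.

Tensorization of entropy (`ent_le`) and symmetrization in each coordinate (`ent_le_of`) give
`Ent(exp u) ≤ ∫ |𝔡u|² exp u`, and also the one-sided version with
`∑ₖ ∫ (u - Tₖu)₊² μₖ(dy)` in place of `|𝔡u|²`.

The function `W` is self-bounding: `∑ₖ ∫ (W - TₖW)₊² μₖ(dy) ≤ 8 B² W` (`selfBounding`). The change
of the `i`-th summand of `W` under resampling of `xₖ` is controlled by `𝔡⁽²⁾f` for `i ≠ k` and by
the bound on `𝔡ₖf` for `i = k`. The Herbst argument and the one-sided inequality yield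
`(1 - 8 B² s) log ∫ exp (s W) ≤ s ∫ W` (`logMgf_selfBounding`). Since `f` has no Hoeffding terms of
order `0` and `1`, applying Efron–Stein to each `𝔇ᵢf` gives `∫ W ≤ B₁²` (`energy_le`).

For `u = ±f`, the Gibbs variational inequality bounds `∫ W exp (t u)` by the entropy of `exp (t u)`
and exponential moments of `W`, and a second Herbst argument (`logMgf_le`) gives
`∫ exp (Λ u) ≤ exp (2/9) ≤ 9/7` at `Λ = 1/(5B)`. Young's inequality between the exponents `1/(7B)`
and `1/(5B)` then brings the bound for `|f|` below `2` (`exp_bound`).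
-/

open MeasureTheory

variable {n : ℕ} {Ω : Fin n → Type*} [∀ i, MeasurableSpace (Ω i)]

/-- The coordinatewise L²-difference operator `𝔡ᵢ`. -/
noncomputable def dd (μ : ∀ i, Measure (Ω i)) (f : (∀ i, Ω i) → ℝ) (i : Fin n)
    (x : ∀ i, Ω i) : ℝ :=
  Real.sqrt ((1 / 2) * ∫ y, (f x - f (Function.update x i y)) ^ 2 ∂(μ i))

/-- The Euclidean norm `|𝔡f(x)|`. -/
noncomputable def ddNorm (μ : ∀ i, Measure (Ω i)) (f : (∀ i, Ω i) → ℝ)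
    (x : ∀ i, Ω i) : ℝ :=
  Real.sqrt (∑ i, dd μ f i x ^ 2)

/-- The difference operator `𝔇ᵢ f(x) = f(x) − ∫ f(x₁,…,yᵢ,…,xₙ) μᵢ(dyᵢ)`. -/
noncomputable def DD (μ : ∀ i, Measure (Ω i)) (f : (∀ i, Ω i) → ℝ) (i : Fin n)
    (x : ∀ i, Ω i) : ℝ :=
  f x - ∫ y, f (Function.update x i y) ∂(μ i)

/-- The squared Hilbert–Schmidt norm `‖𝔇⁽²⁾f(x)‖²_HS` of the de-diagonalized Hessian,
whose `(i,j)` entry is `𝔇ᵢⱼ f(x)` for `i ≠ j` and `0` on the diagonal. -/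
noncomputable def D2HSsq (μ : ∀ i, Measure (Ω i)) (f : (∀ i, Ω i) → ℝ)
    (x : ∀ i, Ω i) : ℝ :=
  ∑ i, ∑ j, if i = j then 0 else DD μ (DD μ f j) i x ^ 2

/-- `h` is a family of Hoeffding kernels: `h S` depends only on the coordinates in `S`,
is integrable in each coordinate, and integrates to zero in each of its own variables. -/
structure IsHoeffdingKernels (μ : ∀ i, Measure (Ω i))
    (h : Finset (Fin n) → (∀ i, Ω i) → ℝ) : Prop where
  meas : ∀ S, Measurable (h S)
  localized : ∀ S, ∀ x y : ∀ i, Ω i, (∀ i ∈ S, x i = y i) → h S x = h S y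
  integrable : ∀ S, ∀ i : Fin n, ∀ x : ∀ i, Ω i,
    Integrable (fun y => h S (Function.update x i y)) (μ i)
  degenerate : ∀ S, ∀ i ∈ S, ∀ x : ∀ i, Ω i,
    (∫ y, h S (Function.update x i y) ∂(μ i)) = 0

/-- The averaging operator `Eᵢ g(x) = ∫ g(x₁,…,yᵢ,…,xₙ) μᵢ(dyᵢ)`. -/
noncomputable def EE (μ : ∀ i, Measure (Ω i)) (g : (∀ i, Ω i) → ℝ) (i : Fin n)
    (x : ∀ i, Ω i) : ℝ :=
  ∫ y, g (Function.update x i y) ∂(μ i)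

/-- The second order L²-difference
`𝔡ᵢⱼ f = ((1/4)((𝔇ᵢⱼf)² + Eᵢ(𝔇ᵢⱼf)² + Eⱼ(𝔇ᵢⱼf)² + Eᵢⱼ(𝔇ᵢⱼf)²))^{1/2}`. -/
noncomputable def dd2 (μ : ∀ i, Measure (Ω i)) (f : (∀ i, Ω i) → ℝ) (i j : Fin n)
    (x : ∀ i, Ω i) : ℝ :=
  Real.sqrt ((1 / 4) * (DD μ (DD μ f j) i x ^ 2
    + EE μ (fun z => DD μ (DD μ f j) i z ^ 2) i x
    + EE μ (fun z => DD μ (DD μ f j) i z ^ 2) j x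
    + EE μ (fun z => EE μ (fun w => DD μ (DD μ f j) i w ^ 2) i z) j x))

/-- The Hilbert–Schmidt norm of the matrix `𝔡⁽²⁾f(x)` with entries `𝔡ᵢⱼ f(x)` for
`i ≠ j` and `0` on the diagonal. -/
noncomputable def d2HS (μ : ∀ i, Measure (Ω i)) (f : (∀ i, Ω i) → ℝ)
    (x : ∀ i, Ω i) : ℝ :=
  Real.sqrt (∑ i, ∑ j, if i = j then 0 else dd2 μ f i j x ^ 2)

set_option linter.unusedSectionVars false

/-! ### Bounded measurable functions -/

/-- Bounded measurable real functions: the class in which all integrands below live. -/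
def BM {α : Type*} [MeasurableSpace α] (f : α → ℝ) : Prop :=
  Measurable f ∧ ∃ C, ∀ x, |f x| ≤ C

namespace BM

variable {α β : Type*} [MeasurableSpace α] [MeasurableSpace β] {f g : α → ℝ}

lemma integrable (hf : BM f) (ν : Measure α) [IsFiniteMeasure ν] : Integrable f ν := by
  obtain ⟨hm, C, hC⟩ := hf
  exact Integrable.of_bound hm.aestronglyMeasurable C (Filter.Eventually.of_forall hC)

lemma const (c : ℝ) : BM (fun _ : α => c) := ⟨measurable_const, |c|, fun _ => le_rfl⟩

lemma comp {g : β → ℝ} (hg : BM g) {m : α → β} (hm : Measurable m) : BM (fun x => g (m x)) :=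
  ⟨hg.1.comp hm, hg.2.imp fun _ hC x => hC (m x)⟩

lemma cont2 (hf : BM f) (hg : BM g) {ψ : ℝ × ℝ → ℝ} (hψ : Continuous ψ) :
    BM (fun x => ψ (f x, g x)) := by
  refine ⟨hψ.measurable.comp (hf.1.prodMk hg.1), ?_⟩
  obtain ⟨-, C, hC⟩ := hf
  obtain ⟨-, D, hD⟩ := hg
  have hK : IsCompact (Set.Icc (-C) C ×ˢ Set.Icc (-D) D) := isCompact_Icc.prod isCompact_Icc
  obtain ⟨M, hM⟩ := hK.exists_bound_of_continuousOn hψ.continuousOn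
  exact ⟨M, fun x => hM _ ⟨abs_le.1 (hC x), abs_le.1 (hD x)⟩⟩

lemma cont (hf : BM f) {ψ : ℝ → ℝ} (hψ : Continuous ψ) : BM (fun x => ψ (f x)) :=
  cont2 hf hf (hψ.comp continuous_fst)

lemma add (hf : BM f) (hg : BM g) : BM (fun x => f x + g x) := cont2 hf hg continuous_add
lemma sub (hf : BM f) (hg : BM g) : BM (fun x => f x - g x) := cont2 hf hg continuous_sub
lemma mul (hf : BM f) (hg : BM g) : BM (fun x => f x * g x) := cont2 hf hg continuous_mul
lemma neg (hf : BM f) : BM (fun x => - f x) := cont hf continuous_neg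
lemma sq (hf : BM f) : BM (fun x => f x ^ 2) := cont hf (continuous_pow 2)
lemma exp (hf : BM f) : BM (fun x => Real.exp (f x)) := cont hf Real.continuous_exp
lemma abs (hf : BM f) : BM (fun x => |f x|) := cont hf continuous_abs
lemma sqrt (hf : BM f) : BM (fun x => √(f x)) := cont hf Real.continuous_sqrt
lemma cmul (c : ℝ) (hf : BM f) : BM (fun x => c * f x) := (const c).mul hf

lemma sum {κ : Type*} (s : Finset κ) {F : κ → α → ℝ} (h : ∀ k ∈ s, BM (F k)) :
    BM (fun x => ∑ k ∈ s, F k x) := by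
  classical
  induction s using Finset.induction_on with
  | empty => simpa using const 0
  | insert a s ha ih =>
    simp only [Finset.sum_insert ha]
    exact (h a (by simp)).add (ih fun k hk => h k (by simp [hk]))

lemma log (hf : BM f) {δ : ℝ} (hδ : 0 < δ) (h : ∀ x, δ ≤ f x) : BM (fun x => Real.log (f x)) := by
  obtain ⟨hm, C, hC⟩ := hf
  refine ⟨Real.measurable_log.comp hm, max (-Real.log δ) (Real.log C), fun x => ?_⟩
  have h1 : Real.log δ ≤ Real.log (f x) := Real.log_le_log hδ (h x)
  have h2 : Real.log (f x) ≤ Real.log C :=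
    Real.log_le_log (hδ.trans_le (h x)) ((le_abs_self _).trans (hC x))
  rw [abs_le]
  constructor
  · have := le_max_left (-Real.log δ) (Real.log C); linarith
  · exact h2.trans (le_max_right _ _)

lemma integral {Φ : α → β → ℝ} (hΦ : BM (fun p : α × β => Φ p.1 p.2)) (ν : Measure β)
    [IsProbabilityMeasure ν] : BM (fun x => ∫ y, Φ x y ∂ν) := by
  obtain ⟨hm, C, hC⟩ := hΦ
  refine ⟨(hm.stronglyMeasurable.integral_prod_right').measurable, C, fun x => ?_⟩
  have := norm_integral_le_of_norm_le_const (μ := ν) (f := fun y => Φ x y) (C := C)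
    (Filter.Eventually.of_forall fun y => hC (x, y))
  simpa using this

lemma slice {Φ : α × β → ℝ} (hΦ : BM Φ) (x : α) : BM (fun y => Φ (x, y)) :=
  hΦ.comp (m := fun y => (x, y)) (by fun_prop)

end BM

/-! ### Averaging operators on the product space -/

/-- Averaging over the coordinates in `S`: the conditional expectation given the other ones.
All coordinates are integrated, but only those in `S` enter the integrand. -/
noncomputable def AA (μ : ∀ i, Measure (Ω i)) (S : Finset (Fin n)) (F : (∀ i, Ω i) → ℝ)
    (x : ∀ i, Ω i) : ℝ :=
  ∫ y, F (S.piecewise y x) ∂(Measure.pi μ)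

lemma measurable_pw (S : Finset (Fin n)) :
    Measurable (fun p : (∀ i, Ω i) × (∀ i, Ω i) => S.piecewise p.2 p.1) := by
  refine measurable_pi_lambda _ fun i => ?_
  by_cases hi : i ∈ S
  · simp only [Finset.piecewise_eq_of_mem _ _ _ hi]; fun_prop
  · simp only [Finset.piecewise_eq_of_notMem _ _ _ hi]; fun_prop

lemma measurable_upd (k : Fin n) :
    Measurable (fun p : (∀ i, Ω i) × Ω k => Function.update p.1 k p.2) := by
  refine measurable_pi_lambda _ fun i => ?_
  by_cases hi : i = k
  · subst hi; simp only [Function.update_self]; fun_prop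
  · simp only [Function.update_of_ne hi]; fun_prop

section Averaging

variable (μ : ∀ i, Measure (Ω i)) [∀ i, IsProbabilityMeasure (μ i)]

lemma pw_mp (S : Finset (Fin n)) :
    MeasurePreserving (fun p : (∀ i, Ω i) × (∀ i, Ω i) => S.piecewise p.2 p.1)
      ((Measure.pi μ).prod (Measure.pi μ)) (Measure.pi μ) := by
  refine ⟨measurable_pw S, ?_⟩
  symm
  refine Measure.pi_eq fun s hs => ?_
  rw [Measure.map_apply (measurable_pw S) (MeasurableSet.univ_pi hs)]
  have : (fun p : (∀ i, Ω i) × (∀ i, Ω i) => S.piecewise p.2 p.1) ⁻¹' (Set.univ.pi s)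
      = (((Sᶜ : Finset (Fin n)) : Set (Fin n)).pi s) ×ˢ ((S : Set (Fin n)).pi s) := by
    ext p
    simp only [Set.mem_preimage, Set.mem_pi, Set.mem_univ, true_imp_iff, Set.mem_prod,
      Finset.mem_coe, Finset.mem_compl]
    constructor
    · intro h
      refine ⟨fun i hi => ?_, fun i hi => ?_⟩
      · simpa [Finset.piecewise_eq_of_notMem _ _ _ hi] using h i
      · simpa [Finset.piecewise_eq_of_mem _ _ _ hi] using h i
    · rintro ⟨h1, h2⟩ i
      by_cases hi : i ∈ S
      · simpa [Finset.piecewise_eq_of_mem _ _ _ hi] using h2 i hi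
      · simpa [Finset.piecewise_eq_of_notMem _ _ _ hi] using h1 i hi
  rw [this, Measure.prod_prod, Measure.pi_pi_finset, Measure.pi_pi_finset, mul_comm,
    Finset.prod_mul_prod_compl]

variable {μ} {F G H : (∀ i, Ω i) → ℝ}

lemma integral_pw (hF : BM F) (S : Finset (Fin n)) :
    ∫ x, ∫ y, F (S.piecewise y x) ∂(Measure.pi μ) ∂(Measure.pi μ) = ∫ x, F x ∂(Measure.pi μ) := by
  have h1 := (pw_mp μ S).map_eq
  conv_rhs => rw [← h1]
  rw [integral_map (measurable_pw S).aemeasurable hF.1.aestronglyMeasurable,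
    integral_prod _ ((hF.comp (measurable_pw S)).integrable _)]

lemma BM.AA (hF : BM F) (S : Finset (Fin n)) : BM (AA μ S F) :=
  BM.integral (Φ := fun x y => F (S.piecewise y x)) (hF.comp (measurable_pw S)) _

lemma AA_empty (F : (∀ i, Ω i) → ℝ) : AA μ ∅ F = F := by
  ext x; simp [AA]

lemma AA_univ (F : (∀ i, Ω i) → ℝ) (x) : AA μ Finset.univ F x = ∫ y, F y ∂(Measure.pi μ) := by
  simp [AA]

lemma AA_AA (hF : BM F) (S T : Finset (Fin n)) : AA μ T (AA μ S F) = AA μ (S ∪ T) F := by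
  ext x
  have h := integral_pw (μ := μ) (F := fun w => F ((S ∪ T).piecewise w x))
    (hF.comp (m := fun w => (S ∪ T).piecewise w x)
      ((measurable_pw (S ∪ T)).comp (measurable_const.prodMk measurable_id))) S
  unfold AA
  rw [← h]
  congr 1; ext y; congr 1; ext z; congr 1
  ext i
  by_cases h1 : i ∈ S <;> by_cases h2 : i ∈ T <;> simp [Finset.piecewise, h1, h2]

lemma EE_eq_AA (hF : Measurable F) (k : Fin n) : EE μ F k = AA μ {k} F := by
  ext x
  unfold EE AA
  have hm : Measurable (fun y => F (Function.update x k y)) :=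
    hF.comp ((measurable_upd k).comp (measurable_const.prodMk measurable_id))
  rw [← (measurePreserving_eval μ k).map_eq,
    integral_map (measurable_pi_apply k).aemeasurable hm.aestronglyMeasurable]
  congr 1; ext y; congr 1
  ext i
  by_cases hi : i = k
  · subst hi; simp [Finset.piecewise]
  · simp [Finset.piecewise, hi]

lemma BM.EE (hF : BM F) (k : Fin n) : BM (EE μ F k) :=
  BM.integral (Φ := fun x y => F (Function.update x k y)) (hF.comp (measurable_upd k)) _

lemma BM.upd (hF : BM F) (x : ∀ i, Ω i) (k : Fin n) : BM (fun y => F (Function.update x k y)) :=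
  (hF.comp (measurable_upd k)).slice x

lemma EE_AA (hF : BM F) (S : Finset (Fin n)) (k : Fin n) :
    EE μ (AA μ S F) k = AA μ (insert k S) F := by
  rw [EE_eq_AA (hF.AA S).1, AA_AA hF, Finset.union_comm, Finset.insert_eq]

lemma AA_EE (hF : BM F) (S : Finset (Fin n)) (k : Fin n) :
    AA μ S (EE μ F k) = AA μ (insert k S) F := by
  rw [EE_eq_AA hF.1, AA_AA hF, Finset.insert_eq]

lemma integral_mul_AA (hF : BM F) (hH : BM H) (S : Finset (Fin n))
    (hS : ∀ x y, H (S.piecewise y x) = H x) :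
    ∫ x, H x * AA μ S F x ∂(Measure.pi μ) = ∫ x, H x * F x ∂(Measure.pi μ) := by
  rw [← integral_pw (hH.mul hF) S]
  congr 1; ext x
  simp only [hS, AA, integral_const_mul]

lemma integral_AA (hF : BM F) (S : Finset (Fin n)) :
    ∫ x, AA μ S F x ∂(Measure.pi μ) = ∫ x, F x ∂(Measure.pi μ) := integral_pw hF S

lemma integral_EE (hF : BM F) (k : Fin n) :
    ∫ x, EE μ F k x ∂(Measure.pi μ) = ∫ x, F x ∂(Measure.pi μ) := by
  rw [EE_eq_AA hF.1, integral_AA hF]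

lemma AA_indep (F : (∀ i, Ω i) → ℝ) {S T : Finset (Fin n)} (h : S ⊆ T) (x y) :
    AA μ T F (S.piecewise y x) = AA μ T F x := by
  unfold AA
  congr 1; ext z; congr 1; ext i
  by_cases h2 : i ∈ T
  · simp [Finset.piecewise, h2]
  · have h1 : i ∉ S := fun h' => h2 (h h')
    simp [Finset.piecewise, h1, h2]

lemma AA_ge (hF : BM F) {δ : ℝ} (h : ∀ x, δ ≤ F x) (S : Finset (Fin n)) (x) : δ ≤ AA μ S F x := by
  have hb : BM (fun y => F (S.piecewise y x)) := (hF.comp (measurable_pw S)).slice x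
  have := integral_mono (μ := Measure.pi μ) (integrable_const δ) (hb.integrable _) (fun y => h _)
  simpa [AA] using this

/-! ### Entropy: tensorization and modified logarithmic Sobolev inequalities -/

/-- The entropy increment in coordinate `k` does not increase if `exp u` is first averaged over
the coordinates in `S`; telescoping over an enumeration of the coordinates gives tensorization. -/
lemma ent_step {u : (∀ i, Ω i) → ℝ} (hu : BM u) (S : Finset (Fin n)) (k : Fin n) :
    ∫ x, Real.exp (u x) * (Real.log (AA μ S (fun z => Real.exp (u z)) x)
        - Real.log (AA μ (insert k S) (fun z => Real.exp (u z)) x)) ∂(Measure.pi μ)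
      ≤ ∫ x, Real.exp (u x) * (u x
        - Real.log (EE μ (fun z => Real.exp (u z)) k x)) ∂(Measure.pi μ) := by
  set F := fun z => Real.exp (u z) with hFdef
  have hF : BM F := hu.exp
  obtain ⟨C, hC⟩ := hu.2
  have hlow : ∀ x, Real.exp (-C) ≤ F x := fun x => Real.exp_le_exp.2 (abs_le.1 (hC x)).1
  have hpos : ∀ T x, 0 < AA μ T F x := fun T x => (Real.exp_pos _).trans_le (AA_ge hF hlow T x)
  have hlog : ∀ T, BM (fun x => Real.log (AA μ T F x)) := fun T =>
    (hF.AA T).log (Real.exp_pos _) (AA_ge hF hlow T)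
  rw [EE_eq_AA hF.1]
  set a := fun x => Real.log (AA μ S F x) with ha
  set b := fun x => Real.log (AA μ (insert k S) F x) with hb
  set c := fun x => Real.log (AA μ {k} F x) with hc
  have hBa : BM a := hlog _
  have hBb : BM b := hlog _
  have hBc : BM c := hlog _
  have key : ∫ x, (F x * (a x - b x) - F x * (u x - c x)) ∂(Measure.pi μ)
      ≤ ∫ x, (Real.exp (a x - b x) * AA μ {k} F x - F x) ∂(Measure.pi μ) := by
    refine integral_mono (((hF.mul (hBa.sub hBb)).sub (hF.mul (hu.sub hBc))).integrable _)
      ((((hBa.sub hBb).exp.mul (hF.AA {k})).sub hF).integrable _) fun x => ?_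
    have h1 := Real.add_one_le_exp (a x - b x + c x - u x)
    have h2 : AA μ {k} F x = Real.exp (c x) := (Real.exp_log (hpos _ _)).symm
    have h3 : Real.exp (a x - b x) * Real.exp (c x) = F x * Real.exp (a x - b x + c x - u x) := by
      simp only [hFdef, ← Real.exp_add]; congr 1; ring
    have h4 : 0 < F x := Real.exp_pos _
    simp only
    rw [h2, h3]
    nlinarith [mul_le_mul_of_nonneg_left h1 h4.le]
  have h0 : ∫ x, (Real.exp (a x - b x) * AA μ {k} F x - F x) ∂(Measure.pi μ) = 0 := by
    rw [integral_sub (((hBa.sub hBb).exp.mul (hF.AA {k})).integrable _) (hF.integrable _)]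
    rw [← integral_mul_AA (μ := μ) (hF.AA {k}) (hBa.sub hBb).exp S
      (fun x y => by
        simp only [ha, hb, AA_indep F (subset_refl S),
          AA_indep F (Finset.subset_insert k S)])]
    rw [AA_AA hF, ← Finset.insert_eq, ← integral_AA hF S, sub_eq_zero]
    congr 1; ext x
    have h2 : AA μ (insert k S) F x = Real.exp (b x) := (Real.exp_log (hpos _ _)).symm
    have h3 : AA μ S F x = Real.exp (a x) := (Real.exp_log (hpos _ _)).symm
    rw [h2, h3, ← Real.exp_add]; congr 1; ring
  rw [h0, integral_sub ((hF.mul (hBa.sub hBb)).integrable _)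
    ((hF.mul (hu.sub hBc)).integrable _)] at key
  linarith

/-- Subadditivity of entropy, with each one-dimensional entropy already bounded by the
covariance of `u` and `exp u`. -/
lemma ent_le {u : (∀ i, Ω i) → ℝ} (hu : BM u) :
    ∫ x, u x * Real.exp (u x) ∂(Measure.pi μ)
      - (∫ x, Real.exp (u x) ∂(Measure.pi μ)) * Real.log (∫ x, Real.exp (u x) ∂(Measure.pi μ))
      ≤ ∑ k, ∫ x, Real.exp (u x) * (u x - EE μ u k x) ∂(Measure.pi μ) := by
  set F := fun z => Real.exp (u z) with hFdef
  have hF : BM F := hu.exp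
  obtain ⟨C, hC⟩ := hu.2
  have hlow : ∀ x, Real.exp (-C) ≤ F x := fun x => Real.exp_le_exp.2 (abs_le.1 (hC x)).1
  have hlog : ∀ T, BM (fun x => Real.log (AA μ T F x)) := fun T =>
    (hF.AA T).log (Real.exp_pos _) (AA_ge hF hlow T)
  have hjen : ∀ k, ∫ x, F x * (u x - Real.log (EE μ F k x)) ∂(Measure.pi μ)
      ≤ ∫ x, F x * (u x - EE μ u k x) ∂(Measure.pi μ) := by
    intro k
    have hl : BM (fun x => Real.log (EE μ F k x)) := by rw [EE_eq_AA hF.1]; exact hlog _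
    refine integral_mono ((hF.mul (hu.sub hl)).integrable _)
      ((hF.mul (hu.sub (hu.EE k))).integrable _) fun x => ?_
    have hx : Real.exp (EE μ u k x) ≤ EE μ F k x := by
      have := integral_mono (μ := μ k)
        (f := fun y => Real.exp (EE μ u k x) * (1 + (u (Function.update x k y) - EE μ u k x)))
        (g := fun y => F (Function.update x k y))
        ((BM.cmul _ ((BM.const 1).add ((hu.upd x k).sub (BM.const _)))).integrable _)
        ((hF.upd x k).integrable _) (fun y => by
          have h1 := Real.add_one_le_exp (u (Function.update x k y) - EE μ u k x)
          have h2 : F (Function.update x k y) = Real.exp (EE μ u k x) *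
              Real.exp (u (Function.update x k y) - EE μ u k x) := by
            simp only [hFdef, ← Real.exp_add]; congr 1; ring
          simp only
          rw [h2]
          exact mul_le_mul_of_nonneg_left (by linarith) (Real.exp_pos _).le)
      rw [integral_const_mul, integral_add (integrable_const _)
        (((hu.upd x k).sub (BM.const _)).integrable _),
        integral_sub ((hu.upd x k).integrable _) (integrable_const _)] at this
      have h5 : ∫ y, u (Function.update x k y) ∂(μ k) = EE μ u k x := rfl
      have h6 : ∫ y, F (Function.update x k y) ∂(μ k) = EE μ F k x := rfl
      rw [h5, h6] at this
      simpa using this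
    have hx2 : EE μ u k x ≤ Real.log (EE μ F k x) := by
      rw [← Real.log_exp (EE μ u k x)]
      exact Real.log_le_log (Real.exp_pos _) hx
    exact mul_le_mul_of_nonneg_left (by linarith) (Real.exp_pos _).le
  have hind : ∀ S : Finset (Fin n), ∫ x, F x * (u x - Real.log (AA μ S F x)) ∂(Measure.pi μ)
      ≤ ∑ k ∈ S, ∫ x, F x * (u x - EE μ u k x) ∂(Measure.pi μ) := by
    intro S
    induction S using Finset.induction_on with
    | empty => simp [AA_empty, hFdef]
    | insert k S hk ih =>
      rw [Finset.sum_insert hk]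
      have h1 := ent_step (μ := μ) hu S k
      have h2 := hjen k
      have h3 : ∫ x, F x * (u x - Real.log (AA μ (insert k S) F x)) ∂(Measure.pi μ)
          = ∫ x, F x * (Real.log (AA μ S F x) - Real.log (AA μ (insert k S) F x)) ∂(Measure.pi μ)
          + ∫ x, F x * (u x - Real.log (AA μ S F x)) ∂(Measure.pi μ) := by
        rw [← integral_add ((hF.mul ((hlog _).sub (hlog _))).integrable _)
          ((hF.mul (hu.sub (hlog _))).integrable _)]
        congr 1; ext x; ring
      rw [h3]
      linarith
  refine le_trans (le_of_eq ?_) (hind Finset.univ)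
  simp only [AA_univ]
  rw [← integral_mul_const, ← integral_sub ((hu.mul hF).integrable _)
    ((hF.mul (BM.const _)).integrable _)]
  congr 1; ext x; simp only [hFdef]; ring

/-- Symmetrization in one coordinate: `x k` and the resampled value are exchangeable. -/
lemma sym_nonneg {u : (∀ i, Ω i) → ℝ} (hu : BM u) (k : Fin n) {ψ : ℝ × ℝ → ℝ}
    (hψ : Continuous ψ) (hpos : ∀ a b, 0 ≤ ψ (a, b) + ψ (b, a)) :
    0 ≤ ∫ x, ∫ y, ψ (u x, u (Function.update x k y)) ∂(μ k) ∂(Measure.pi μ) := by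
  have hΦ : BM (fun p : (∀ i, Ω i) × Ω k => ψ (u p.1, u (Function.update p.1 k p.2))) :=
    BM.cont2 (hu.comp measurable_fst) (hu.comp (measurable_upd k)) hψ
  have hH : BM (fun x => ∫ y, ψ (u x, u (Function.update x k y)) ∂(μ k)) := BM.integral
    (Φ := fun x y => ψ (u x, u (Function.update x k y))) hΦ _
  rw [← integral_EE hH k]
  refine integral_nonneg fun x => ?_
  simp only [EE, Function.update_idem, Pi.zero_apply]
  set w := fun y => u (Function.update x k y)
  have hw : BM w := hu.upd x k
  have hp : BM (fun p : Ω k × Ω k => ψ (w p.1, w p.2)) :=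
    BM.cont2 (hw.comp measurable_fst) (hw.comp measurable_snd) hψ
  have hp' : BM (fun p : Ω k × Ω k => ψ (w p.2, w p.1)) :=
    BM.cont2 (hw.comp measurable_snd) (hw.comp measurable_fst) hψ
  have hsw : ∫ z, ∫ y, ψ (w z, w y) ∂(μ k) ∂(μ k) = ∫ z, ∫ y, ψ (w y, w z) ∂(μ k) ∂(μ k) :=
    integral_integral_swap (hp.integrable _)
  have hadd : ∫ z, ∫ y, (ψ (w z, w y) + ψ (w y, w z)) ∂(μ k) ∂(μ k)
      = ∫ z, ∫ y, ψ (w z, w y) ∂(μ k) ∂(μ k) + ∫ z, ∫ y, ψ (w y, w z) ∂(μ k) ∂(μ k) := by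
    rw [← integral_add ((BM.integral (Φ := fun z y => ψ (w z, w y)) hp _).integrable _)
      ((BM.integral (Φ := fun z y => ψ (w y, w z)) hp' _).integrable _)]
    congr 1; ext z
    rw [integral_add ((hp.slice z).integrable _) ((hp'.slice z).integrable _)]
  have hnn : 0 ≤ ∫ z, ∫ y, (ψ (w z, w y) + ψ (w y, w z)) ∂(μ k) ∂(μ k) :=
    integral_nonneg fun z => integral_nonneg fun y => hpos _ _
  linarith

/-- Modified logarithmic Sobolev inequality: the covariance of `u` and `exp u` in coordinate `k`
is symmetrized, so that any `q` dominating `(a - b) (exp a - exp b)` after symmetrization bounds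
the entropy of `exp u`. -/
lemma ent_le_of {u : (∀ i, Ω i) → ℝ} (hu : BM u) {q : ℝ × ℝ → ℝ} (hq : Continuous q)
    (hq2 : ∀ a b, (a - b) * (Real.exp a - Real.exp b) ≤ q (a, b) + q (b, a)) :
    ∫ x, u x * Real.exp (u x) ∂(Measure.pi μ)
      - (∫ x, Real.exp (u x) ∂(Measure.pi μ)) * Real.log (∫ x, Real.exp (u x) ∂(Measure.pi μ))
      ≤ ∫ x, ∑ k, ∫ y, q (u x, u (Function.update x k y)) ∂(μ k) ∂(Measure.pi μ) := by
  refine (ent_le (μ := μ) hu).trans ?_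
  have hB : ∀ (k : Fin n) {ψ : ℝ × ℝ → ℝ}, Continuous ψ →
      BM (fun p : (∀ i, Ω i) × Ω k => ψ (u p.1, u (Function.update p.1 k p.2))) := fun k ψ hψ =>
    BM.cont2 (hu.comp measurable_fst) (hu.comp (measurable_upd k)) hψ
  have hI : ∀ (k : Fin n) {ψ : ℝ × ℝ → ℝ}, Continuous ψ →
      BM (fun x => ∫ y, ψ (u x, u (Function.update x k y)) ∂(μ k)) := fun k ψ hψ => BM.integral
    (Φ := fun x y => ψ (u x, u (Function.update x k y))) (hB k hψ) _
  rw [integral_finsetSum _ (fun k _ => (hI k hq).integrable _)]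
  refine Finset.sum_le_sum fun k _ => ?_
  have hc : Continuous (fun p : ℝ × ℝ => Real.exp p.1 * (p.1 - p.2)) := by fun_prop
  have h := sym_nonneg (μ := μ) hu k (ψ := fun p => q p - Real.exp p.1 * (p.1 - p.2))
    (hq.sub hc) (fun a b => by have := hq2 a b; simp only; linarith)
  have e : ∀ x, ∫ y, (q (u x, u (Function.update x k y))
      - Real.exp (u x) * (u x - u (Function.update x k y))) ∂(μ k)
      = ∫ y, q (u x, u (Function.update x k y)) ∂(μ k) - Real.exp (u x) * (u x - EE μ u k x) := by
    intro x
    have h1 : BM (fun y => q (u x, u (Function.update x k y))) := (hB k hq).slice x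
    have h2 : BM (fun y => Real.exp (u x) * (u x - u (Function.update x k y))) :=
      (hB k hc).slice x
    rw [integral_sub (h1.integrable _) (h2.integrable _),
      integral_const_mul, integral_sub (integrable_const _) ((hu.upd x k).integrable _)]
    simp [EE]
  simp only [e] at h
  rw [integral_sub ((hI k hq).integrable _)
    ((hu.exp.mul (hu.sub (hu.EE k))).integrable _)] at h
  linarith

end Averaging

/-! ### The Herbst argument -/

lemma exp_sub_mul_le (a b : ℝ) : (a - b) * (Real.exp a - Real.exp b)
    ≤ 1 / 2 * (a - b) ^ 2 * Real.exp a + 1 / 2 * (b - a) ^ 2 * Real.exp b := by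
  have key : ∀ t : ℝ, 0 ≤ t → 0 ≤ t * (Real.exp t + 1) - 2 * (Real.exp t - 1) := by
    have hd : ∀ t : ℝ, HasDerivAt (fun t => t * (Real.exp t + 1) - 2 * (Real.exp t - 1))
        (1 * (Real.exp t + 1) + t * Real.exp t - 2 * Real.exp t) t := fun t =>
      ((hasDerivAt_id t).mul ((Real.hasDerivAt_exp t).add_const 1)).sub
        (((Real.hasDerivAt_exp t).sub_const 1).const_mul 2)
    have hm : MonotoneOn (fun t : ℝ => t * (Real.exp t + 1) - 2 * (Real.exp t - 1))
        (Set.Ici 0) := by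
      refine monotoneOn_of_deriv_nonneg (convex_Ici 0)
        (fun t _ => (hd t).continuousAt.continuousWithinAt)
        (fun t _ => (hd t).differentiableAt.differentiableWithinAt) fun t _ => ?_
      rw [(hd t).deriv]
      have h1 := Real.add_one_le_exp (-t)
      have h2 : Real.exp (-t) * Real.exp t = 1 := by rw [← Real.exp_add]; simp
      nlinarith [mul_le_mul_of_nonneg_right h1 (Real.exp_pos t).le]
    intro t ht
    simpa using hm (Set.mem_Ici.2 le_rfl) (Set.mem_Ici.2 ht) ht
  have main : ∀ a b : ℝ, b ≤ a → (a - b) * (Real.exp a - Real.exp b)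
      ≤ 1 / 2 * (a - b) ^ 2 * (Real.exp a + Real.exp b) := by
    intro a b hab
    have h1 := key (a - b) (by linarith)
    have h2 : Real.exp a = Real.exp (a - b) * Real.exp b := by rw [← Real.exp_add]; simp
    have h3 : 0 ≤ (a - b) * Real.exp b := mul_nonneg (by linarith) (Real.exp_pos b).le
    rw [h2]
    nlinarith [mul_nonneg h3 h1]
  rcases le_total b a with h | h
  · have := main a b h; nlinarith
  · have := main b a h; nlinarith

lemma exp_sub_mul_le_max (a b : ℝ) : (a - b) * (Real.exp a - Real.exp b)
    ≤ max (a - b) 0 ^ 2 * Real.exp a + max (b - a) 0 ^ 2 * Real.exp b := by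
  have main : ∀ a b : ℝ, b ≤ a →
      (a - b) * (Real.exp a - Real.exp b) ≤ (a - b) ^ 2 * Real.exp a := by
    intro a b hab
    have h1 := Real.add_one_le_exp (b - a)
    have h2 : Real.exp b = Real.exp (b - a) * Real.exp a := by rw [← Real.exp_add]; simp
    have h3 : 0 ≤ (a - b) * Real.exp a := mul_nonneg (by linarith) (Real.exp_pos a).le
    rw [h2]
    nlinarith [mul_le_mul_of_nonneg_left h1 h3]
  rcases le_total b a with h | h
  · rw [max_eq_left (by linarith), max_eq_right (by linarith : b - a ≤ 0)]
    have := main a b h; linarith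
  · rw [max_eq_right (by linarith : a - b ≤ 0), max_eq_left (by linarith)]
    have := main b a h; linarith

/-- The hypothesis says that `t ↦ K t / t - ψ t` is nonincreasing on `(0, Λ)`; its limit at `0`
is `K' 0 - ψ 0`. -/
lemma herbst {K K' ψ ψ' : ℝ → ℝ} {Λ : ℝ} (hΛ : 0 < Λ) (hK : ∀ t, HasDerivAt K (K' t) t)
    (hψ : ∀ t, HasDerivAt ψ (ψ' t) t) (h0 : K 0 = 0)
    (h : ∀ t, 0 < t → t < Λ → t * K' t - K t ≤ t ^ 2 * ψ' t) :
    K Λ / Λ - ψ Λ ≤ K' 0 - ψ 0 := by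
  have hd : ∀ t, t ≠ 0 → HasDerivAt (fun t => K t / t - ψ t)
      ((K' t * t - K t * 1) / t ^ 2 - ψ' t) t := fun t ht =>
    ((hK t).div (hasDerivAt_id t) ht).sub (hψ t)
  have hanti : AntitoneOn (fun t => K t / t - ψ t) (Set.Ioc 0 Λ) := by
    refine antitoneOn_of_deriv_nonpos (convex_Ioc 0 Λ)
      (fun t ht => (hd t ht.1.ne').continuousAt.continuousWithinAt)
      (fun t ht => ?_) fun t ht => ?_
    · rw [interior_Ioc] at ht
      exact (hd t ht.1.ne').differentiableAt.differentiableWithinAt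
    · rw [interior_Ioc] at ht
      rw [(hd t ht.1.ne').deriv]
      have h2 : 0 < t ^ 2 := by have := ht.1; positivity
      rw [sub_nonpos, div_le_iff₀ h2]
      have := h t ht.1 ht.2
      linarith
  have hlim : Filter.Tendsto (fun t => K t / t - ψ t) (nhdsWithin 0 (Set.Ioi 0))
      (nhds (K' 0 - ψ 0)) := by
    refine Filter.Tendsto.sub ?_ ((hψ 0).continuousAt.tendsto.mono_left nhdsWithin_le_nhds)
    have h1 := (hasDerivAt_iff_tendsto_slope.1 (hK 0)).mono_left
      (nhdsWithin_mono 0 (fun t (ht : t ∈ Set.Ioi (0:ℝ)) => (ne_of_gt ht : t ≠ 0)))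
    refine h1.congr fun t => ?_
    simp [slope_def_field, h0]
  refine ge_of_tendsto hlim ?_
  filter_upwards [Ioc_mem_nhdsGT hΛ] with t ht
  exact hanti ht ⟨hΛ, le_rfl⟩ ht.2

section Prob

variable {α : Type*} [MeasurableSpace α] {ν : Measure α} [IsProbabilityMeasure ν] {X W u : α → ℝ}

lemma mgf_pos' (hX : BM X) : 0 < ∫ x, Real.exp (X x) ∂ν :=
  integral_exp_pos (hX.exp.integrable ν)

lemma hasDerivAt_logMgf (hX : BM X) (t : ℝ) :
    HasDerivAt (fun t => Real.log (∫ x, Real.exp (t * X x) ∂ν))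
      ((∫ x, X x * Real.exp (t * X x) ∂ν) / (∫ x, Real.exp (t * X x) ∂ν)) t := by
  have hset : ProbabilityTheory.integrableExpSet X ν = Set.univ := by
    ext s
    simp only [ProbabilityTheory.integrableExpSet, Set.mem_ofPred_eq, Set.mem_univ, iff_true]
    exact (BM.cmul s hX).exp.integrable ν
  have := ProbabilityTheory.hasDerivAt_mgf (X := X) (μ := ν) (t := t) (by simp [hset])
  exact this.log (mgf_pos' (BM.cmul t hX)).ne'

/-- The Gibbs variational inequality. -/
lemma gibbs (hu : BM u) (hW : BM W) :
    ∫ x, W x * Real.exp (u x) ∂ν ≤ (∫ x, u x * Real.exp (u x) ∂ν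
      - (∫ x, Real.exp (u x) ∂ν) * Real.log (∫ x, Real.exp (u x) ∂ν))
      + (∫ x, Real.exp (u x) ∂ν) * Real.log (∫ x, Real.exp (W x) ∂ν) := by
  set m := ∫ x, Real.exp (u x) ∂ν with hm
  set N := ∫ x, Real.exp (W x) ∂ν with hN
  have hmp : 0 < m := mgf_pos' hu
  have hNp : 0 < N := mgf_pos' hW
  set r := Real.log m - Real.log N
  have hr : Real.exp r = m / N := by rw [Real.exp_sub, Real.exp_log hmp, Real.exp_log hNp]
  have key : ∫ x, (W x * Real.exp (u x) - u x * Real.exp (u x) + r * Real.exp (u x)) ∂ν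
      ≤ ∫ x, (Real.exp r * Real.exp (W x) - Real.exp (u x)) ∂ν := by
    refine integral_mono
      ((((hW.mul hu.exp).sub (hu.mul hu.exp)).add (BM.cmul r hu.exp)).integrable _)
      (((BM.cmul _ hW.exp).sub hu.exp).integrable _) fun x => ?_
    have h1 := Real.add_one_le_exp (W x - u x + r)
    have h2 : Real.exp r * Real.exp (W x) = Real.exp (u x) * Real.exp (W x - u x + r) := by
      rw [← Real.exp_add, ← Real.exp_add]; congr 1; ring
    simp only
    rw [h2]
    nlinarith [mul_le_mul_of_nonneg_left h1 (Real.exp_pos (u x)).le]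
  rw [integral_add (((hW.mul hu.exp).sub (hu.mul hu.exp)).integrable _)
      ((BM.cmul r hu.exp).integrable _),
    integral_sub ((hW.mul hu.exp).integrable _) ((hu.mul hu.exp).integrable _),
    integral_sub ((BM.cmul _ hW.exp).integrable _) (hu.exp.integrable _),
    integral_const_mul, integral_const_mul, ← hm, ← hN, hr, div_mul_cancel₀ _ hNp.ne'] at key
  have : r * m = m * Real.log m - m * Real.log N := by ring
  linarith

end Prob

section Concentration

variable {μ : ∀ i, Measure (Ω i)} [∀ i, IsProbabilityMeasure (μ i)]

/-- Exponential integrability of a self-bounding function. -/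
lemma logMgf_selfBounding {W : (∀ i, Ω i) → ℝ} (hW : BM W) {κ s : ℝ} (hs : 0 < s)
    (hV : ∀ x, ∑ k, ∫ y, max (W x - W (Function.update x k y)) 0 ^ 2 ∂(μ k) ≤ κ * W x) :
    (1 - κ * s) * Real.log (∫ x, Real.exp (s * W x) ∂(Measure.pi μ))
      ≤ s * ∫ x, W x ∂(Measure.pi μ) := by
  have hent : ∀ t, 0 < t → t * (∫ x, W x * Real.exp (t * W x) ∂(Measure.pi μ))
      - (∫ x, Real.exp (t * W x) ∂(Measure.pi μ)) *
        Real.log (∫ x, Real.exp (t * W x) ∂(Measure.pi μ))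
      ≤ t ^ 2 * (κ * ∫ x, W x * Real.exp (t * W x) ∂(Measure.pi μ)) := by
    intro t ht
    have hq : Continuous (fun p : ℝ × ℝ => max (p.1 - p.2) 0 ^ 2 * Real.exp p.1) := by fun_prop
    have hu : BM (fun x => t * W x) := BM.cmul t hW
    have h := ent_le_of (μ := μ) hu hq (fun a b => exp_sub_mul_le_max a b)
    have e1 : ∫ x, t * W x * Real.exp (t * W x) ∂(Measure.pi μ)
        = t * ∫ x, W x * Real.exp (t * W x) ∂(Measure.pi μ) := by
      rw [← integral_const_mul]; congr 1; ext x; ring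
    rw [e1] at h
    refine h.trans ?_
    rw [← integral_const_mul, ← integral_const_mul]
    have hB : BM (fun x => ∑ k, ∫ y, max (t * W x - t * W (Function.update x k y)) 0 ^ 2
        * Real.exp (t * W x) ∂(μ k)) :=
      BM.sum _ fun k _ => BM.integral
        (Φ := fun x y => max (t * W x - t * W (Function.update x k y)) 0 ^ 2
          * Real.exp (t * W x))
        (BM.cont2 (hu.comp measurable_fst) (hu.comp (measurable_upd k)) hq) _
    refine integral_mono (hB.integrable _)
      ((BM.cmul _ (BM.cmul _ (hW.mul hu.exp))).integrable _) fun x => ?_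
    have e2 : ∀ k, ∫ y, max (t * W x - t * W (Function.update x k y)) 0 ^ 2
        * Real.exp (t * W x) ∂(μ k)
        = t ^ 2 * Real.exp (t * W x) * ∫ y, max (W x - W (Function.update x k y)) 0 ^ 2 ∂(μ k) := by
      intro k
      rw [← integral_const_mul]; congr 1; ext y
      have : max (t * W x - t * W (Function.update x k y)) 0
          = t * max (W x - W (Function.update x k y)) 0 := by
        rw [mul_max_of_nonneg _ _ ht.le, mul_zero, mul_sub]
      rw [this]; ring
    simp only [e2, ← Finset.mul_sum]
    have h3 := mul_le_mul_of_nonneg_left (hV x)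
      (by positivity : 0 ≤ t ^ 2 * Real.exp (t * W x))
    linarith
  have h := herbst (K := fun t => Real.log (∫ x, Real.exp (t * W x) ∂(Measure.pi μ)))
    (ψ := fun t => κ * Real.log (∫ x, Real.exp (t * W x) ∂(Measure.pi μ))) hs
    (fun t => hasDerivAt_logMgf hW t) (fun t => (hasDerivAt_logMgf hW t).const_mul κ) (by simp)
    (fun t ht _ => by
      have hM : 0 < ∫ x, Real.exp (t * W x) ∂(Measure.pi μ) := mgf_pos' (BM.cmul t hW)
      have := hent t ht
      refine le_of_mul_le_mul_right ?_ hM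
      field_simp
      linarith)
  simp only [zero_mul, Real.exp_zero, mul_one, integral_const, probReal_univ, smul_eq_mul,
    Real.log_one, mul_zero, sub_zero, div_one] at h
  have h4 := mul_le_mul_of_nonneg_left h hs.le
  rw [mul_sub, mul_div_cancel₀ _ hs.ne'] at h4
  linarith

/-- The entropy of `exp (t u)` is at most `t² ∫ W exp (t u)` with `W = |𝔡u|²`. The Gibbs inequality
with `2 t² W` turns half of this into entropy again, which leaves the exponential moments of `W`;
the Herbst argument then integrates the resulting differential inequality. -/
lemma logMgf_le {u : (∀ i, Ω i) → ℝ} (hu : BM u) (hmean : ∫ x, u x ∂(Measure.pi μ) = 0)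
    {W : (∀ i, Ω i) → ℝ} (hWdef : ∀ x, W x
      = ∑ k, 1 / 2 * ∫ y, (u x - u (Function.update x k y)) ^ 2 ∂(μ k))
    {C Λ : ℝ} (hΛ : 0 < Λ) (hW : ∀ s, 0 < s → s ≤ 2 * Λ ^ 2 →
      Real.log (∫ x, Real.exp (s * W x) ∂(Measure.pi μ)) ≤ C * s) :
    Real.log (∫ x, Real.exp (Λ * u x) ∂(Measure.pi μ)) ≤ 2 * C * Λ ^ 2 := by
  have hBW : BM W := by
    have : W = fun x => ∑ k, 1 / 2 * ∫ y, (u x - u (Function.update x k y)) ^ 2 ∂(μ k) :=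
      funext hWdef
    rw [this]
    exact BM.sum _ fun k _ => BM.cmul _ (BM.integral
      (Φ := fun x y => (u x - u (Function.update x k y)) ^ 2)
      ((hu.comp measurable_fst).sub (hu.comp (measurable_upd k))).sq _)
  have hent : ∀ t, 0 < t → t < Λ → t * (∫ x, u x * Real.exp (t * u x) ∂(Measure.pi μ))
      - (∫ x, Real.exp (t * u x) ∂(Measure.pi μ)) *
        Real.log (∫ x, Real.exp (t * u x) ∂(Measure.pi μ))
      ≤ (∫ x, Real.exp (t * u x) ∂(Measure.pi μ)) * (2 * C * t ^ 2) := by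
    intro t ht htΛ
    have hq : Continuous (fun p : ℝ × ℝ => 1 / 2 * (p.1 - p.2) ^ 2 * Real.exp p.1) := by fun_prop
    have htu : BM (fun x => t * u x) := BM.cmul t hu
    have h := ent_le_of (μ := μ) htu hq (fun a b => exp_sub_mul_le a b)
    have e1 : ∫ x, t * u x * Real.exp (t * u x) ∂(Measure.pi μ)
        = t * ∫ x, u x * Real.exp (t * u x) ∂(Measure.pi μ) := by
      rw [← integral_const_mul]; congr 1; ext x; ring
    have e2 : ∫ x, ∑ k, ∫ y, 1 / 2 * (t * u x - t * u (Function.update x k y)) ^ 2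
        * Real.exp (t * u x) ∂(μ k) ∂(Measure.pi μ)
        = t ^ 2 * ∫ x, W x * Real.exp (t * u x) ∂(Measure.pi μ) := by
      rw [← integral_const_mul]; congr 1; ext x
      rw [hWdef, Finset.sum_mul, Finset.mul_sum]
      refine Finset.sum_congr rfl fun k _ => ?_
      rw [← integral_const_mul, ← integral_mul_const, ← integral_const_mul]
      congr 1; ext y; ring
    have hg := gibbs (ν := Measure.pi μ) htu (BM.cmul (2 * t ^ 2) hBW)
    have e3 : ∫ x, 2 * t ^ 2 * W x * Real.exp (t * u x) ∂(Measure.pi μ)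
        = 2 * (t ^ 2 * ∫ x, W x * Real.exp (t * u x) ∂(Measure.pi μ)) := by
      rw [← integral_const_mul, ← integral_const_mul]; congr 1; ext x; ring
    simp only at h
    rw [e1, e2] at h
    rw [e1, e3] at hg
    have hM : 0 < ∫ x, Real.exp (t * u x) ∂(Measure.pi μ) := mgf_pos' htu
    have h5 := mul_le_mul_of_nonneg_left
      (hW (2 * t ^ 2) (by positivity) (by nlinarith)) hM.le
    have e4 : C * (2 * t ^ 2) = 2 * C * t ^ 2 := by ring
    rw [e4] at h5
    linarith
  have h := herbst (K := fun t => Real.log (∫ x, Real.exp (t * u x) ∂(Measure.pi μ)))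
    (ψ := fun t => 2 * C * t) (ψ' := fun _ => 2 * C) hΛ
    (fun t => hasDerivAt_logMgf hu t)
    (fun t => by simpa using (hasDerivAt_id t).const_mul (2 * C)) (by simp)
    (fun t ht htΛ => by
      have hM : 0 < ∫ x, Real.exp (t * u x) ∂(Measure.pi μ) := mgf_pos' (BM.cmul t hu)
      have := hent t ht htΛ
      refine le_of_mul_le_mul_right ?_ hM
      field_simp
      linarith)
  simp only [zero_mul, Real.exp_zero, mul_one, hmean, mul_zero, sub_zero, zero_div] at h
  rw [sub_nonpos, div_le_iff₀ hΛ] at h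
  linarith

end Concentration

/-! ### First and second order differences -/

section Prob2

variable {α : Type*} [MeasurableSpace α] {ν : Measure α} [IsProbabilityMeasure ν] {v w : α → ℝ}

lemma integral_mul_sq_le (hv : BM v) (hw : BM w) :
    (∫ y, v y * w y ∂ν) ^ 2 ≤ (∫ y, v y ^ 2 ∂ν) * ∫ y, w y ^ 2 ∂ν := by
  have h : ∀ t : ℝ, 0 ≤ (∫ y, v y ^ 2 ∂ν) * (t * t) + (2 * ∫ y, v y * w y ∂ν) * t
      + ∫ y, w y ^ 2 ∂ν := by
    intro t
    have h1 : 0 ≤ ∫ y, (t * v y + w y) ^ 2 ∂ν := integral_nonneg fun y => sq_nonneg _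
    have h2 : ∫ y, (t * v y + w y) ^ 2 ∂ν
        = ∫ y, ((t * t) * v y ^ 2 + (2 * t) * (v y * w y) + w y ^ 2) ∂ν := by
      congr 1; ext y; ring
    rw [h2, integral_add (((BM.cmul _ hv.sq).add (BM.cmul _ (hv.mul hw))).integrable _)
      (hw.sq.integrable _), integral_add ((BM.cmul _ hv.sq).integrable _)
      ((BM.cmul _ (hv.mul hw)).integrable _), integral_const_mul, integral_const_mul] at h1
    linarith
  have := discrim_le_zero h
  unfold discrim at this
  nlinarith

lemma integral_sq_le (hv : BM v) : (∫ y, v y ∂ν) ^ 2 ≤ ∫ y, v y ^ 2 ∂ν := by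
  simpa using integral_mul_sq_le (ν := ν) hv (BM.const 1)

lemma integral_sub_sq (hw : BM w) (c : ℝ) : ∫ y, (c - w y) ^ 2 ∂ν
    = (c - ∫ y, w y ∂ν) ^ 2 + ∫ z, (w z - ∫ y, w y ∂ν) ^ 2 ∂ν := by
  set m := ∫ y, w y ∂ν with hm
  have h2 : ∀ y, (c - w y) ^ 2 = (c - m) ^ 2 - 2 * (c - m) * (w y - m) + (w y - m) ^ 2 := by
    intro y; ring
  have hb : BM (fun y => w y - m) := hw.sub (BM.const m)
  simp only [h2]
  rw [integral_add (((BM.const _).sub (BM.cmul _ hb)).integrable _) (hb.sq.integrable _),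
    integral_sub (integrable_const _) ((BM.cmul _ hb).integrable _), integral_const_mul,
    integral_sub (hw.integrable _) (integrable_const _)]
  simp [← hm]

end Prob2

/-- Minkowski's inequality in the form obtained by optimizing over the weight `θ`. -/
lemma le_of_forall_weight {T p q c : ℝ} (hp : 0 ≤ p) (hq : 0 ≤ q) (hc : 0 ≤ c)
    (h : ∀ θ : ℝ, 0 < θ → T ≤ (1 + θ) * (p ^ 2 * c) + (1 + 1 / θ) * (q ^ 2 * c)) :
    T ≤ (p + q) ^ 2 * c := by
  have hlim : Filter.Tendsto (fun δ : ℝ => (p + q + 2 * δ) ^ 2 * c) (nhdsWithin 0 (Set.Ioi 0))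
      (nhds ((p + q) ^ 2 * c)) := by
    have : Continuous (fun δ : ℝ => (p + q + 2 * δ) ^ 2 * c) := by fun_prop
    simpa using (this.tendsto 0).mono_left nhdsWithin_le_nhds
  refine ge_of_tendsto hlim ?_
  filter_upwards [self_mem_nhdsWithin] with δ hδ
  have hδ : 0 < δ := hδ
  -- the optimal weight for the perturbed, strictly positive values `p + δ`, `q + δ`
  have hθ : 0 < (q + δ) / (p + δ) := by positivity
  refine (h _ hθ).trans ?_
  have h1 : p ^ 2 * c ≤ (p + δ) ^ 2 * c := by gcongr; linarith
  have h2 : q ^ 2 * c ≤ (q + δ) ^ 2 * c := by gcongr; linarith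
  calc (1 + (q + δ) / (p + δ)) * (p ^ 2 * c) + (1 + 1 / ((q + δ) / (p + δ))) * (q ^ 2 * c)
      ≤ (1 + (q + δ) / (p + δ)) * ((p + δ) ^ 2 * c)
        + (1 + 1 / ((q + δ) / (p + δ))) * ((q + δ) ^ 2 * c) := by gcongr
    _ = (p + q + 2 * δ) ^ 2 * c := by
      have : p + δ ≠ 0 := by positivity
      have : q + δ ≠ 0 := by positivity
      field_simp
      ring

section Differences

variable {μ : ∀ i, Measure (Ω i)} [∀ i, IsProbabilityMeasure (μ i)] {f : (∀ i, Ω i) → ℝ}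

lemma BM.DD (hf : BM f) (i : Fin n) : BM (DD μ f i) := hf.sub (hf.EE i)

lemma integral_diff_sq (hf : BM f) (i : Fin n) (x : ∀ i, Ω i) :
    ∫ y, (f x - f (Function.update x i y)) ^ 2 ∂(μ i)
      = DD μ f i x ^ 2 + EE μ (fun z => DD μ f i z ^ 2) i x := by
  rw [integral_sub_sq (hf.upd x i)]
  simp [DD, EE, Function.update_idem]

lemma dd_sq (f : (∀ i, Ω i) → ℝ) (i : Fin n) (x : ∀ i, Ω i) :
    dd μ f i x ^ 2 = 1 / 2 * ∫ y, (f x - f (Function.update x i y)) ^ 2 ∂(μ i) := by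
  unfold dd
  exact Real.sq_sqrt (mul_nonneg (by norm_num) (integral_nonneg fun y => sq_nonneg _))

lemma dd2_sq (f : (∀ i, Ω i) → ℝ) (i j : Fin n) (x : ∀ i, Ω i) :
    dd2 μ f i j x ^ 2 = (1 / 4) * (DD μ (DD μ f j) i x ^ 2
    + EE μ (fun z => DD μ (DD μ f j) i z ^ 2) i x
    + EE μ (fun z => DD μ (DD μ f j) i z ^ 2) j x
    + EE μ (fun z => EE μ (fun w => DD μ (DD μ f j) i w ^ 2) i z) j x) := by
  unfold dd2
  refine Real.sq_sqrt ?_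
  have h1 : ∀ k z, 0 ≤ EE μ (fun z => DD μ (DD μ f j) i z ^ 2) k z := fun k z =>
    integral_nonneg fun y => sq_nonneg _
  have h2 : 0 ≤ EE μ (fun z => EE μ (fun w => DD μ (DD μ f j) i w ^ 2) i z) j x :=
    integral_nonneg fun y => h1 i _
  have := h1 i x
  have := h1 j x
  positivity

lemma measurable_upd2 (i j : Fin n) (x : ∀ i, Ω i) :
    Measurable (fun p : Ω i × Ω j => Function.update (Function.update x i p.1) j p.2) :=
  (measurable_upd j).comp (((measurable_upd i).comp
    (measurable_const.prodMk measurable_fst)).prodMk measurable_snd)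

lemma BM.mixed (hf : BM f) (i j : Fin n) (x : ∀ i, Ω i) :
    BM (fun p : Ω i × Ω j => f x - f (Function.update x i p.1) - f (Function.update x j p.2)
      + f (Function.update (Function.update x i p.1) j p.2)) :=
  (((BM.const _).sub ((hf.upd x i).comp measurable_fst)).sub
    ((hf.upd x j).comp measurable_snd)).add (hf.comp (measurable_upd2 i j x))

/-- The two descriptions of the second order difference agree: by resampling, and by
centred differences. -/
lemma integral_mixed_sq (hf : BM f) {i j : Fin n} (hij : i ≠ j) (x : ∀ i, Ω i) :
    ∫ y, ∫ z, (f x - f (Function.update x i y) - f (Function.update x j z)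
      + f (Function.update (Function.update x i y) j z)) ^ 2 ∂(μ j) ∂(μ i)
      = 4 * dd2 μ f i j x ^ 2 := by
  have hu : BM (DD μ f j) := hf.DD j
  have inner : ∀ y, ∫ z, (f x - f (Function.update x i y) - f (Function.update x j z)
      + f (Function.update (Function.update x i y) j z)) ^ 2 ∂(μ j)
      = (DD μ f j x - DD μ f j (Function.update x i y)) ^ 2
        + ∫ z, (DD μ f j (Function.update x j z)
          - DD μ f j (Function.update (Function.update x j z) i y)) ^ 2 ∂(μ j) := by
    intro y
    have hG : BM (fun w : ∀ i, Ω i => f w - f (Function.update w i y)) :=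
      hf.sub (hf.comp ((measurable_upd i).comp (measurable_id.prodMk measurable_const)))
    have h := integral_diff_sq (μ := μ) hG j x
    have hD : ∀ w, DD μ (fun w : ∀ i, Ω i => f w - f (Function.update w i y)) j w
        = DD μ f j w - DD μ f j (Function.update w i y) := by
      intro w
      unfold DD
      have e : ∀ z, Function.update (Function.update w j z) i y
          = Function.update (Function.update w i y) j z := fun z =>
        Function.update_comm hij.symm _ _ _
      simp only [e]
      rw [integral_sub ((hf.upd w j).integrable _)
        ((hf.upd (Function.update w i y) j).integrable _)]
      ring
    simp only [hD] at h
    rw [show EE μ (fun z => (DD μ f j z - DD μ f j (Function.update z i y)) ^ 2) j x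
      = ∫ z, (DD μ f j (Function.update x j z)
          - DD μ f j (Function.update (Function.update x j z) i y)) ^ 2 ∂(μ j) from rfl] at h
    rw [← h]
    congr 1; ext z
    rw [Function.update_comm hij.symm]
    ring
  simp only [inner]
  have hB1 : BM (fun y => (DD μ f j x - DD μ f j (Function.update x i y)) ^ 2) :=
    ((BM.const _).sub (hu.upd x i)).sq
  have hB2 : BM (fun p : Ω i × Ω j => (DD μ f j (Function.update x j p.2)
          - DD μ f j (Function.update (Function.update x j p.2) i p.1)) ^ 2) := by
    refine BM.sq (BM.sub ((hu.upd x j).comp measurable_snd) ?_)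
    exact (hu.comp (measurable_upd2 j i x)).comp measurable_swap
  rw [integral_add (hB1.integrable _) ((BM.integral (Φ := fun y z =>
      (DD μ f j (Function.update x j z)
          - DD μ f j (Function.update (Function.update x j z) i y)) ^ 2) hB2 _).integrable _),
    integral_integral_swap (hB2.integrable _)]
  simp only [integral_diff_sq hu i]
  have hBD : BM (fun w => DD μ (DD μ f j) i w ^ 2) := (hu.DD i).sq
  rw [integral_add ((hBD.upd x j).integrable _) (((hBD.EE i).upd x j).integrable _), dd2_sq]
  simp only [EE]
  ring

lemma d2HS_sq_sum (f : (∀ i, Ω i) → ℝ) {x : ∀ i, Ω i} {B : ℝ} (hB : 0 ≤ B) (h : d2HS μ f x ≤ B) :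
    ∑ i, ∑ j, (if i = j then 0 else dd2 μ f i j x ^ 2) ≤ B ^ 2 := by
  unfold d2HS at h
  exact (Real.sqrt_le_left hB).1 h

/-- The squared gradient norm `|𝔡f|²` is self-bounding. The diagonal terms are controlled by `B2`,
because resampling `x j` changes `f x - f (update x j y)` by a quantity not depending on `y`. -/
lemma selfBounding (hf : BM f) {B1 B2 : ℝ} (hB1' : 0 ≤ B1) (hB2' : 0 ≤ B2)
    (hB1 : ∀ x, d2HS μ f x ≤ B1) (hB2 : ∀ i x, dd μ f i x ≤ B2)
    {W : (∀ i, Ω i) → ℝ} (hBW : BM W) (hW : ∀ x, W x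
      = ∑ k, 1 / 2 * ∫ y, (f x - f (Function.update x k y)) ^ 2 ∂(μ k)) (x : ∀ i, Ω i) :
    ∑ k, ∫ y, max (W x - W (Function.update x k y)) 0 ^ 2 ∂(μ k) ≤ 8 * (B1 + B2) ^ 2 * W x := by
  set a : ∀ i, Ω i → ℝ := fun i y => f x - f (Function.update x i y) with ha
  have hBa : ∀ i, BM (a i) := fun i => (BM.const _).sub (hf.upd x i)
  set Δ : ∀ j i, Ω j → Ω i → ℝ := fun j i z y => f x - f (Function.update x j z)
    - f (Function.update x i y) + f (Function.update (Function.update x j z) i y) with hΔ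
  have hBΔ : ∀ j i, BM (fun p : Ω j × Ω i => Δ j i p.1 p.2) := fun j i => hf.mixed j i x
  have hWa : W x = ∑ k, 1 / 2 * ∫ y, a k y ^ 2 ∂(μ k) := hW x
  have hA0 : ∀ i, 0 ≤ ∫ y, a i y ^ 2 ∂(μ i) := fun i => integral_nonneg fun y => sq_nonneg _
  have hW0 : 0 ≤ W x := by
    rw [hWa]; exact Finset.sum_nonneg fun k _ => mul_nonneg (by norm_num) (hA0 k)
  have hdd : ∀ j, ∫ y, a j y ^ 2 ∂(μ j) = 2 * dd μ f j x ^ 2 := by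
    intro j; rw [dd_sq]; simp only [ha]; ring
  set R : ∀ j, Ω j → ℝ := fun j z => ∑ i, if j = i then 0 else ∫ y, Δ j i z y ^ 2 ∂(μ i) with hR
  have hBI : ∀ j i, BM (fun z => ∫ y, Δ j i z y ^ 2 ∂(μ i)) := fun j i =>
    BM.integral (Φ := fun z y => Δ j i z y ^ 2) (hBΔ j i).sq _
  have hBite : ∀ j i, BM (fun z => if j = i then 0 else ∫ y, Δ j i z y ^ 2 ∂(μ i)) := by
    intro j i
    by_cases h : j = i
    · simpa [h] using BM.const 0
    · simpa [h] using hBI j i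
  have hBR : ∀ j, BM (R j) := fun j => BM.sum _ fun i _ => hBite j i
  -- pointwise bound on the increment of `W`
  have hinc : ∀ j z, W x - W (Function.update x j z)
      ≤ (∑ i, if j = i then 0 else ∫ y, a i y * Δ j i z y ∂(μ i)) + a j z * ∫ y, a j y ∂(μ j) := by
    intro j z
    set x' := Function.update x j z with hx'
    rw [hWa, hW x', ← Finset.sum_sub_distrib]
    have hsplit : a j z * ∫ y, a j y ∂(μ j)
        = ∑ i, if j = i then a j z * ∫ y, a j y ∂(μ j) else 0 := by simp
    rw [hsplit, ← Finset.sum_add_distrib]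
    refine Finset.sum_le_sum fun i _ => ?_
    have hBb : BM (fun y => f x' - f (Function.update x' i y)) := (BM.const _).sub (hf.upd x' i)
    have hstep : 1 / 2 * ∫ y, a i y ^ 2 ∂(μ i)
        - 1 / 2 * ∫ y, (f x' - f (Function.update x' i y)) ^ 2 ∂(μ i)
        ≤ ∫ y, a i y * (a i y - (f x' - f (Function.update x' i y))) ∂(μ i) := by
      rw [← integral_const_mul, ← integral_const_mul,
        ← integral_sub ((BM.cmul _ (hBa i).sq).integrable _) ((BM.cmul _ hBb.sq).integrable _)]
      refine integral_mono (((BM.cmul _ (hBa i).sq).sub (BM.cmul _ hBb.sq)).integrable _)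
        (((hBa i).mul ((hBa i).sub hBb)).integrable _) fun y => ?_
      simp only
      nlinarith [sq_nonneg (a i y - (f x' - f (Function.update x' i y)))]
    refine hstep.trans (le_of_eq ?_)
    by_cases h : j = i
    · subst h
      simp only [if_true, zero_add]
      rw [← integral_const_mul]
      congr 1; ext y
      simp only [ha, hx', Function.update_idem]
      ring
    · simp only [if_neg h, add_zero]
      congr 1; ext y
      simp only [ha, hΔ, hx']
      ring
  have hP : ∀ j z, (∑ i, if j = i then 0 else ∫ y, a i y * Δ j i z y ∂(μ i)) ^ 2
      ≤ 2 * W x * R j z := by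
    intro j z
    have h1 : (∑ i, if j = i then 0 else ∫ y, a i y * Δ j i z y ∂(μ i)) ^ 2
        ≤ (∑ i, ∫ y, a i y ^ 2 ∂(μ i)) * R j z := by
      refine Finset.sum_sq_le_sum_mul_sum_of_sq_le_mul _ (fun i _ => hA0 i) (fun i _ => ?_)
        (fun i _ => ?_)
      · split_ifs
        · exact le_rfl
        · exact integral_nonneg fun y => sq_nonneg _
      · split_ifs
        · simp
        · exact integral_mul_sq_le (hBa i) ((hBΔ j i).slice z)
    have h2 : ∑ i, ∫ y, a i y ^ 2 ∂(μ i) = 2 * W x := by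
      rw [hWa, Finset.mul_sum]; refine Finset.sum_congr rfl fun i _ => ?_; ring
    rwa [h2] at h1
  have hQ : ∀ j z, (a j z * ∫ y, a j y ∂(μ j)) ^ 2 ≤ 2 * B2 ^ 2 * a j z ^ 2 := by
    intro j z
    have h1 := integral_sq_le (ν := μ j) (hBa j)
    rw [hdd] at h1
    have h2 : dd μ f j x ^ 2 ≤ B2 ^ 2 := by
      have : 0 ≤ dd μ f j x := Real.sqrt_nonneg _
      gcongr; exact hB2 j x
    rw [mul_pow, mul_comm]
    exact mul_le_mul_of_nonneg_right (by linarith) (sq_nonneg _)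
  have hsumR : ∑ j, ∫ z, R j z ∂(μ j) ≤ 4 * B1 ^ 2 := by
    have h1 : ∀ j, ∫ z, R j z ∂(μ j) = ∑ i, 4 * (if j = i then 0 else dd2 μ f j i x ^ 2) := by
      intro j
      rw [hR, integral_finsetSum _ fun i _ => (hBite j i).integrable _]
      refine Finset.sum_congr rfl fun i _ => ?_
      by_cases h : j = i
      · simp [h]
      · simp only [if_neg h]; exact integral_mixed_sq hf h x
    simp only [h1, ← Finset.mul_sum]
    have := d2HS_sq_sum f hB1' (hB1 x)
    linarith
  have hsuma : ∑ j, ∫ z, a j z ^ 2 ∂(μ j) = 2 * W x := by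
    rw [hWa, Finset.mul_sum]; refine Finset.sum_congr rfl fun i _ => ?_; ring
  rw [show 8 * (B1 + B2) ^ 2 * W x = (B1 + B2) ^ 2 * (8 * W x) by ring]
  refine le_of_forall_weight hB1' hB2' (by positivity) fun θ hθ => ?_
  have hterm : ∀ j, ∫ z, max (W x - W (Function.update x j z)) 0 ^ 2 ∂(μ j)
      ≤ (1 + θ) * (2 * W x) * (∫ z, R j z ∂(μ j))
        + (1 + 1 / θ) * (2 * B2 ^ 2) * ∫ z, a j z ^ 2 ∂(μ j) := by
    intro j
    rw [← integral_const_mul, ← integral_const_mul,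
      ← integral_add ((BM.cmul _ (hBR j)).integrable _) ((BM.cmul _ (hBa j).sq).integrable _)]
    have hBm : BM (fun z => max (W x - W (Function.update x j z)) 0 ^ 2) :=
      BM.cont2 (BM.const (W x)) (hBW.upd x j) (ψ := fun p => max (p.1 - p.2) 0 ^ 2)
        (by fun_prop)
    refine integral_mono (hBm.integrable _)
      (((BM.cmul _ (hBR j)).add (BM.cmul _ (hBa j).sq)).integrable _) fun z => ?_
    set P := ∑ i, if j = i then 0 else ∫ y, a i y * Δ j i z y ∂(μ i) with hPdef
    set Q := a j z * ∫ y, a j y ∂(μ j) with hQdef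
    have h1 : max (W x - W (Function.update x j z)) 0 ≤ |P + Q| :=
      max_le ((hinc j z).trans (le_abs_self _)) (abs_nonneg _)
    have h2 : max (W x - W (Function.update x j z)) 0 ^ 2 ≤ (P + Q) ^ 2 := by
      rw [← sq_abs (P + Q)]
      exact pow_le_pow_left₀ (le_max_right _ _) h1 2
    have h3 : (P + Q) ^ 2 ≤ (1 + θ) * P ^ 2 + (1 + 1 / θ) * Q ^ 2 := by
      have : (1 + θ) * P ^ 2 + (1 + 1 / θ) * Q ^ 2 - (P + Q) ^ 2 = (θ * P - Q) ^ 2 / θ := by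
        field_simp; ring
      have h4 : 0 ≤ (θ * P - Q) ^ 2 / θ := by positivity
      linarith
    have h5 : (1 + θ) * P ^ 2 ≤ (1 + θ) * (2 * W x * R j z) :=
      mul_le_mul_of_nonneg_left (hP j z) (by positivity)
    have h6 : (1 + 1 / θ) * Q ^ 2 ≤ (1 + 1 / θ) * (2 * B2 ^ 2 * a j z ^ 2) :=
      mul_le_mul_of_nonneg_left (hQ j z) (by positivity)
    simp only
    linarith
  refine (Finset.sum_le_sum fun j _ => hterm j).trans ?_
  rw [Finset.sum_add_distrib, ← Finset.mul_sum, ← Finset.mul_sum, hsuma]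
  have h7 : (1 + θ) * (2 * W x) * ∑ j, ∫ z, R j z ∂(μ j) ≤ (1 + θ) * (2 * W x) * (4 * B1 ^ 2) :=
    mul_le_mul_of_nonneg_left hsumR (by positivity)
  have h8 : 0 ≤ (1 + 1 / θ) * (4 * (B2 ^ 2 * W x)) := by positivity
  linarith

/-! ### The energy bound from the Hoeffding decomposition -/

lemma integral_AA_sq_le (hf : BM f) (S : Finset (Fin n)) :
    ∫ x, AA μ S f x ^ 2 ∂(Measure.pi μ) ≤ ∫ x, f x ^ 2 ∂(Measure.pi μ) := by
  rw [← integral_AA hf.sq S]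
  refine integral_mono ((hf.AA S).sq.integrable _) ((hf.sq.AA S).integrable _) fun x => ?_
  exact integral_sq_le ((hf.comp (measurable_pw S)).slice x)

lemma AA_DD (hf : BM f) (S : Finset (Fin n)) (j : Fin n) :
    AA μ S (DD μ f j) = fun x => AA μ S f x - AA μ (insert j S) f x := by
  rw [← AA_EE hf S j]
  ext x
  exact integral_sub (((hf.comp (measurable_pw S)).slice x).integrable _)
    ((((hf.EE j).comp (measurable_pw S)).slice x).integrable _)

/-- The Efron–Stein inequality for a function with vanishing average over the coordinates
in `T`. -/
lemma efronStein (hf : BM f) (T : Finset (Fin n)) (hT : AA μ T f = 0) :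
    ∫ x, f x ^ 2 ∂(Measure.pi μ) ≤ ∑ j ∈ T, ∫ x, DD μ f j x ^ 2 ∂(Measure.pi μ) := by
  have hind : ∀ S : Finset (Fin n), ∫ x, f x ^ 2 ∂(Measure.pi μ)
      - ∫ x, AA μ S f x ^ 2 ∂(Measure.pi μ) ≤ ∑ j ∈ S, ∫ x, DD μ f j x ^ 2 ∂(Measure.pi μ) := by
    intro S
    induction S using Finset.induction_on with
    | empty => simp [AA_empty]
    | insert j S hj ih =>
      rw [Finset.sum_insert hj]
      have h1 := integral_AA_sq_le (μ := μ) (hf.DD (μ := μ) j) S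
      rw [AA_DD hf] at h1
      have hS : BM (AA μ S f) := hf.AA S
      have hjS : BM (AA μ (insert j S) f) := hf.AA _
      have h2 : ∫ x, AA μ (insert j S) f x * AA μ S f x ∂(Measure.pi μ)
          = ∫ x, AA μ (insert j S) f x ^ 2 ∂(Measure.pi μ) := by
        rw [← integral_mul_AA hS hjS {j} (fun x y => AA_indep f (by simp) x y), AA_AA hf,
          Finset.union_comm, ← Finset.insert_eq]
        congr 1; ext x; ring
      have h3 : ∀ x, (AA μ S f x - AA μ (insert j S) f x) ^ 2 = AA μ S f x ^ 2
          - 2 * (AA μ (insert j S) f x * AA μ S f x) + AA μ (insert j S) f x ^ 2 := by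
        intro x; ring
      simp only [h3] at h1
      rw [integral_add ((hS.sq.sub (BM.cmul _ (hjS.mul hS))).integrable _) (hjS.sq.integrable _),
        integral_sub (hS.sq.integrable _) ((BM.cmul _ (hjS.mul hS)).integrable _),
        integral_const_mul, h2] at h1
      linarith
  have := hind T
  simpa [hT] using this

/-- Averaging over `T` kills exactly the kernels that involve a coordinate of `T`. -/
lemma AA_hoeffding (hf : BM f) {h : Finset (Fin n) → (∀ i, Ω i) → ℝ}
    (hker : IsHoeffdingKernels μ h) (hsum : ∀ x, f x = ∑ S : Finset (Fin n), h S x)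
    (T : Finset (Fin n)) :
    ∀ x, AA μ T f x = ∑ S : Finset (Fin n), if Disjoint S T then h S x else 0 := by
  induction T using Finset.induction_on with
  | empty => intro x; simp [AA_empty, hsum]
  | insert j T hj ih =>
    intro x
    rw [← EE_AA hf T j]
    unfold EE
    simp only [ih]
    rw [integral_finsetSum _ fun S _ => by
      split_ifs
      · exact hker.integrable S j x
      · exact integrable_const 0]
    refine Finset.sum_congr rfl fun S _ => ?_
    by_cases h1 : Disjoint S T
    · by_cases h2 : j ∈ S
      · have h3 : ¬ Disjoint S (insert j T) := by
          rw [Finset.disjoint_insert_right]; simp [h2]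
        simp only [h1, h3, if_true, if_false]
        exact hker.degenerate S j h2 x
      · have h3 : Disjoint S (insert j T) := by
          rw [Finset.disjoint_insert_right]; exact ⟨h2, h1⟩
        simp only [h1, h3, if_true]
        have h4 : ∀ y, h S (Function.update x j y) = h S x := fun y =>
          hker.localized S _ _ fun i hi => by
            have hij : i ≠ j := fun e => h2 (e ▸ hi)
            exact Function.update_of_ne hij _ _
        simp [h4]
    · have h3 : ¬ Disjoint S (insert j T) := by
        rw [Finset.disjoint_insert_right]; exact fun h => h1 h.2
      simp [h1, h3]

/-- `∫ |𝔡f|² ≤ B1²`. Here `∫ |𝔡f|²` is the sum of the `∫ (𝔇ᵢf)²`, and averaging `𝔇ᵢf` over the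
coordinates other than `i` gives `0`, so the Efron–Stein inequality over these coordinates bounds
it by the integrated squares of the mixed differences. -/
lemma energy_le (hf : BM f) (hdeg : ∀ i, AA μ (Finset.univ.erase i) f = 0)
    (hmean : ∫ x, f x ∂(Measure.pi μ) = 0) {B1 : ℝ} (hB1' : 0 ≤ B1)
    (hB1 : ∀ x, d2HS μ f x ≤ B1) {W : (∀ i, Ω i) → ℝ} (hW : ∀ x, W x
      = ∑ k, 1 / 2 * ∫ y, (f x - f (Function.update x k y)) ^ 2 ∂(μ k)) :
    ∫ x, W x ∂(Measure.pi μ) ≤ B1 ^ 2 := by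
  have h1 : ∫ x, W x ∂(Measure.pi μ) = ∑ i, ∫ x, DD μ f i x ^ 2 ∂(Measure.pi μ) := by
    simp only [hW, integral_diff_sq hf]
    have hb : ∀ i, BM (fun x => DD μ f i x ^ 2) := fun i => (hf.DD i).sq
    rw [integral_finsetSum _ fun i _ =>
      (BM.cmul (1 / 2) ((hb i).add ((hb i).EE i))).integrable _]
    refine Finset.sum_congr rfl fun i _ => ?_
    rw [integral_const_mul, integral_add ((hb i).integrable _) (((hb i).EE i).integrable _),
      integral_EE (hb i)]
    ring
  have h2 : ∀ i, ∫ x, DD μ f i x ^ 2 ∂(Measure.pi μ)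
      ≤ ∑ j, if j = i then 0 else ∫ x, DD μ (DD μ f i) j x ^ 2 ∂(Measure.pi μ) := by
    intro i
    refine (efronStein (μ := μ) (hf.DD i) (Finset.univ.erase i) ?_).trans (le_of_eq ?_)
    · rw [AA_DD hf, hdeg i, Finset.insert_erase (Finset.mem_univ i)]
      ext x
      simp [AA_univ, hmean]
    · rw [← Finset.sum_erase_add _ _ (Finset.mem_univ i), if_pos rfl, add_zero]
      refine Finset.sum_congr rfl fun j hj => ?_
      rw [if_neg (Finset.ne_of_mem_erase hj)]
  have hb : ∀ i j, BM (fun x => DD μ (DD μ f j) i x ^ 2) := fun i j => ((hf.DD j).DD i).sq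
  have hBdd : ∀ i j, BM (fun x => dd2 μ f i j x ^ 2) := by
    intro i j
    simp only [dd2_sq]
    exact BM.cmul _ ((((hb i j).add ((hb i j).EE i)).add ((hb i j).EE j)).add
      (((hb i j).EE i).EE j))
  have h3 : ∀ i j, ∫ x, dd2 μ f i j x ^ 2 ∂(Measure.pi μ)
      = ∫ x, DD μ (DD μ f j) i x ^ 2 ∂(Measure.pi μ) := by
    intro i j
    simp only [dd2_sq]
    have e : ∀ x, EE μ (fun z => EE μ (fun w => DD μ (DD μ f j) i w ^ 2) i z) j x
      = EE μ (EE μ (fun w => DD μ (DD μ f j) i w ^ 2) i) j x := fun x => rfl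
    simp only [e]
    rw [integral_const_mul, integral_add
        ((((hb i j).add ((hb i j).EE i)).add ((hb i j).EE j)).integrable _)
        ((((hb i j).EE i).EE j).integrable _),
      integral_add (((hb i j).add ((hb i j).EE i)).integrable _) (((hb i j).EE j).integrable _),
      integral_add ((hb i j).integrable _) (((hb i j).EE i).integrable _),
      integral_EE ((hb i j).EE i), integral_EE (hb i j), integral_EE (hb i j)]
    ring
  have hBite : ∀ i j, BM (fun x => if i = j then 0 else dd2 μ f i j x ^ 2) := by
    intro i j
    by_cases h : i = j
    · simpa [h] using BM.const 0
    · simpa [h] using hBdd i j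
  have h4 : ∫ x, ∑ i, ∑ j, (if i = j then 0 else dd2 μ f i j x ^ 2) ∂(Measure.pi μ)
      ≤ ∫ _, B1 ^ 2 ∂(Measure.pi μ) :=
    integral_mono ((BM.sum _ fun i _ => BM.sum _ fun j _ => hBite i j).integrable _)
      (integrable_const _) fun x => d2HS_sq_sum f hB1' (hB1 x)
  rw [integral_finsetSum _ fun i _ => (BM.sum _ fun j _ => hBite i j).integrable _] at h4
  have h5 : ∀ i, ∫ x, ∑ j, (if i = j then 0 else dd2 μ f i j x ^ 2) ∂(Measure.pi μ)
      = ∑ j, if i = j then 0 else ∫ x, DD μ (DD μ f j) i x ^ 2 ∂(Measure.pi μ) := by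
    intro i
    rw [integral_finsetSum _ fun j _ => (hBite i j).integrable _]
    refine Finset.sum_congr rfl fun j _ => ?_
    by_cases h : i = j
    · simp [h]
    · simp only [if_neg h]; exact h3 i j
  simp only [h5] at h4
  rw [Finset.sum_comm] at h4
  rw [h1]
  refine (Finset.sum_le_sum fun i _ => h2 i).trans (h4.trans ?_)
  simp

/-! ### Exponential integrability -/

/-- The constant `1/7` is valid for arbitrary product measures. -/
lemma exp_bound (hf : BM f) (hdeg : ∀ i, AA μ (Finset.univ.erase i) f = 0)
    (hmean : ∫ x, f x ∂(Measure.pi μ) = 0) {B1 B2 : ℝ} (hB1' : 0 ≤ B1) (hB2' : 0 ≤ B2)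
    (hB1 : ∀ x, d2HS μ f x ≤ B1) (hB2 : ∀ i x, dd μ f i x ≤ B2) (hB : 0 < B1 + B2) :
    ∫ x, Real.exp ((1 / 7) / (B1 + B2) * |f x|) ∂(Measure.pi μ) ≤ 2 := by
  set B := B1 + B2 with hBdef
  set W : (∀ i, Ω i) → ℝ := fun x =>
    ∑ k, 1 / 2 * ∫ y, (f x - f (Function.update x k y)) ^ 2 ∂(μ k) with hWdef
  have hBW : BM W := BM.sum _ fun k _ => BM.cmul _ (BM.integral
      (Φ := fun x y => (f x - f (Function.update x k y)) ^ 2)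
      ((hf.comp measurable_fst).sub (hf.comp (measurable_upd k))).sq _)
  have hEW : ∫ x, W x ∂(Measure.pi μ) ≤ B ^ 2 :=
    (energy_le hf hdeg hmean hB1' hB1 (fun x => rfl)).trans (by gcongr; linarith)
  have hself := selfBounding (μ := μ) hf hB1' hB2' hB1 hB2 hBW (fun x => rfl)
  set Λ := 1 / (5 * B) with hΛdef
  have hΛ : 0 < Λ := by positivity
  have hΛB : Λ ^ 2 * B ^ 2 = 1 / 25 := by rw [hΛdef]; field_simp; norm_num
  -- for `s ≤ 2 Λ²` the factor `1 - 8 B² s` is at least `9 / 25`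
  have hlogW : ∀ s, 0 < s → s ≤ 2 * Λ ^ 2 →
      Real.log (∫ x, Real.exp (s * W x) ∂(Measure.pi μ)) ≤ 25 / 9 * B ^ 2 * s := by
    intro s hs hsΛ
    have h1 := logMgf_selfBounding (μ := μ) hBW hs hself
    have h2 : 8 * B ^ 2 * s ≤ 16 / 25 := by
      have := mul_le_mul_of_nonneg_left hsΛ (by positivity : 0 ≤ 8 * B ^ 2)
      nlinarith
    have h3 : 0 ≤ Real.log (∫ x, Real.exp (s * W x) ∂(Measure.pi μ)) := by
      refine Real.log_nonneg ?_
      have := integral_mono (μ := Measure.pi μ) (integrable_const (1 : ℝ))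
        ((BM.cmul s hBW).exp.integrable _) (fun x => Real.one_le_exp (mul_nonneg hs.le
          (Finset.sum_nonneg fun k _ => mul_nonneg (by norm_num)
            (integral_nonneg fun y => sq_nonneg _))))
      simpa using this
    have h4 : s * ∫ x, W x ∂(Measure.pi μ) ≤ s * B ^ 2 := mul_le_mul_of_nonneg_left hEW hs.le
    nlinarith [mul_le_mul_of_nonneg_right (by linarith : 9 / 25 ≤ 1 - 8 * B ^ 2 * s) h3]
  have hexp : Real.exp (2 / 9) ≤ 9 / 7 := by
    have h1 := Real.add_one_le_exp (-(2 / 9) : ℝ)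
    have h2 : Real.exp (-(2 / 9)) * Real.exp (2 / 9) = 1 := by rw [← Real.exp_add]; simp
    nlinarith [Real.exp_pos (2 / 9)]
  have hpm : ∀ u : (∀ i, Ω i) → ℝ, BM u → ∫ x, u x ∂(Measure.pi μ) = 0 →
      (∀ x, W x = ∑ k, 1 / 2 * ∫ y, (u x - u (Function.update x k y)) ^ 2 ∂(μ k)) →
      ∫ x, Real.exp (Λ * u x) ∂(Measure.pi μ) ≤ 9 / 7 := by
    intro u hu hu0 huW
    have h1 := logMgf_le (μ := μ) hu hu0 huW hΛ hlogW
    have h2 : 2 * (25 / 9 * B ^ 2) * Λ ^ 2 = 2 / 9 := by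
      rw [show 2 * (25 / 9 * B ^ 2) * Λ ^ 2 = 50 / 9 * (Λ ^ 2 * B ^ 2) by ring, hΛB]; norm_num
    rw [h2, Real.log_le_iff_le_exp (mgf_pos' (BM.cmul Λ hu))] at h1
    exact h1.trans hexp
  have hp := hpm f hf hmean fun x => rfl
  have hm := hpm (fun x => - f x) hf.neg (by rw [integral_neg, hmean, neg_zero]) fun x => by
    simp only [hWdef]
    refine Finset.sum_congr rfl fun k _ => ?_
    congr 2; ext y; ring
  -- interpolation: Young's inequality `w ^ 5 ≤ 5 / (7 r²) w ^ 7 + 2 / 7 r ^ 5` at `r = 8 / 7`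
  have hyoung : ∀ w : ℝ, 0 ≤ w → w ^ 5 ≤ 35 / 64 * w ^ 7 + 2 / 7 * (8 / 7) ^ 5 := by
    intro w hw
    obtain ⟨s, rfl⟩ : ∃ s, w = 8 / 7 * s := ⟨7 / 8 * w, by ring⟩
    have hs : 0 ≤ s := by linarith
    have : 0 ≤ (s - 1) ^ 2 * (5 * s ^ 5 + 10 * s ^ 4 + 8 * s ^ 3 + 6 * s ^ 2 + 4 * s + 2) := by
      positivity
    nlinarith
  have hpt : ∀ x, Real.exp ((1 / 7) / B * |f x|)
      ≤ 35 / 64 * (Real.exp (Λ * f x) + Real.exp (Λ * - f x)) + 2 / 7 * (8 / 7) ^ 5 := by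
    intro x
    have h1 := hyoung (Real.exp (1 / (35 * B) * |f x|)) (Real.exp_pos _).le
    rw [← Real.exp_nat_mul, ← Real.exp_nat_mul] at h1
    have e1 : ((5 : ℕ) : ℝ) * (1 / (35 * B) * |f x|) = (1 / 7) / B * |f x| := by
      push_cast; field_simp; ring
    have e2 : ((7 : ℕ) : ℝ) * (1 / (35 * B) * |f x|) = Λ * |f x| := by
      rw [hΛdef]; push_cast; field_simp; ring
    rw [e1, e2] at h1
    have h2 : Real.exp (Λ * |f x|) ≤ Real.exp (Λ * f x) + Real.exp (Λ * - f x) := by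
      rcases abs_cases (f x) with ⟨h, -⟩ | ⟨h, -⟩ <;> rw [h]
      · linarith [Real.exp_pos (Λ * - f x)]
      · linarith [Real.exp_pos (Λ * f x)]
    linarith
  have hBp : BM (fun x => Real.exp (Λ * f x)) := (BM.cmul _ hf).exp
  have hBm : BM (fun x => Real.exp (Λ * - f x)) := (BM.cmul _ hf.neg).exp
  refine (integral_mono ((BM.cmul _ hf.abs).exp.integrable _)
    (((BM.cmul _ (hBp.add hBm)).add (BM.const _)).integrable _) hpt).trans ?_
  rw [integral_add ((BM.cmul _ (hBp.add hBm)).integrable _) (integrable_const _),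
    integral_const_mul, integral_add (hBp.integrable _) (hBm.integrable _)]
  simp only [integral_const, probReal_univ, smul_eq_mul, one_mul]
  norm_num
  norm_num at hp hm
  linarith

end Differences

/-- Theorem 6.1: if `f` has no Hoeffding terms of order `0` and `1`,
`‖𝔡⁽²⁾f‖_HS ≤ B₁` and `|𝔡ᵢf| ≤ B₂` for all `i`, then
`∫ exp((c/(B₁+B₂))|f|) dμ ≤ 2` with `c = 1/11`; if all the measures `μᵢ` are
two-point measures, one can take `c = 1/7`. -/
theorem second_order_concentration_simpler_conditions
    (μ : ∀ i, Measure (Ω i)) [∀ i, IsProbabilityMeasure (μ i)]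
    (f : (∀ i, Ω i) → ℝ) (hmeas : Measurable f) (hbdd : ∃ C, ∀ x, |f x| ≤ C)
    (h : Finset (Fin n) → (∀ i, Ω i) → ℝ) (hker : IsHoeffdingKernels μ h)
    (hsum : ∀ x, f x = ∑ S : Finset (Fin n), h S x)
    (hlow : ∀ S : Finset (Fin n), S.card ≤ 1 → h S = 0)
    (B1 B2 : ℝ) (hB1' : 0 ≤ B1) (hB2' : 0 ≤ B2)
    (hB1 : ∀ x, d2HS μ f x ≤ B1)
    (hB2 : ∀ i x, dd μ f i x ≤ B2) :
    (∫ x, Real.exp ((1 / 11) / (B1 + B2) * |f x|) ∂(Measure.pi μ) ≤ 2) ∧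
    ((∀ i, ∃ a c : Ω i, a ≠ c ∧ ∃ p : ℝ, p ∈ Set.Ioo (0 : ℝ) 1 ∧
        μ i = ENNReal.ofReal p • Measure.dirac a
          + ENNReal.ofReal (1 - p) • Measure.dirac c) →
      ∫ x, Real.exp ((1 / 7) / (B1 + B2) * |f x|) ∂(Measure.pi μ) ≤ 2) := by
  have hf : BM f := ⟨hmeas, hbdd⟩
  -- averaging over all coordinates but `i` leaves the kernels with `S ⊆ {i}`, which vanish
  have hdeg : ∀ i, AA μ (Finset.univ.erase i) f = 0 := by
    intro i
    ext x
    rw [AA_hoeffding hf hker hsum]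
    refine Finset.sum_eq_zero fun S _ => ?_
    split_ifs with hS
    · have hsub : S ⊆ {i} := fun k hk => by
        by_contra hki
        exact Finset.disjoint_left.1 hS hk (by simpa using hki)
      rw [hlow S (by simpa using Finset.card_le_card hsub)]
      rfl
    · rfl
  have hmean : ∫ x, f x ∂(Measure.pi μ) = 0 := by
    rw [← integral_AA hf Finset.univ]
    have h0 : ∀ x, AA μ Finset.univ f x = 0 := fun x => by
      rw [AA_hoeffding hf hker hsum]
      refine Finset.sum_eq_zero fun S _ => ?_
      split_ifs with hS
      · have hS0 : S = ∅ := Finset.eq_empty_of_forall_notMem fun k hk =>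
          Finset.disjoint_left.1 hS hk (Finset.mem_univ k)
        rw [hlow S (by simp [hS0])]
        rfl
      · rfl
    simp [h0]
  rcases (add_nonneg hB1' hB2').eq_or_lt with hB | hB
  · -- both exponents are `0`, by the convention `c / 0 = 0`
    rw [← hB]
    simp
  · have h7 := exp_bound hf hdeg hmean hB1' hB2' hB1 hB2 hB
    refine ⟨(integral_mono ((BM.cmul _ hf.abs).exp.integrable _)
      ((BM.cmul _ hf.abs).exp.integrable _) fun x => ?_).trans h7, fun _ => h7⟩
    refine Real.exp_le_exp.2 (mul_le_mul_of_nonneg_right ?_ (abs_nonneg _))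
    gcongr
    norm_num
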